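/- Assume N ≥ 2 and that the two layers are identical, L₁ = L₂ = L₀. Then for every budget c ≥ 0, the uniform weights w = (c/N)𝟙 satisfy λ₂(L(w)) = min{2c/N, λ₂(L₀)}; hence the uniform weight distribution is optimal for every budget when the layers are identical. -/

import Mathlib

open Matrix

/-- The supra-Laplacian of a two-layer multiplex with layer Laplacians `L₁`, `L₂`
and one-to-one inter-layer weights `w`: the block matrix
`[[L₁ + W, −W], [−W, L₂ + W]]` with `W = diag w`. -/
noncomputable def supraLaplacian {N : ℕ} (L₁ L₂ : Matrix (Fin N) (Fin N) ℝ)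
    (w : Fin N → ℝ) : Matrix (Fin N ⊕ Fin N) (Fin N ⊕ Fin N) ℝ :=
  Matrix.fromBlocks (L₁ + Matrix.diagonal w) (-Matrix.diagonal w)
    (-Matrix.diagonal w) (L₂ + Matrix.diagonal w)

/-- Algebraic connectivity: the minimum of `vᵀ M v` over unit vectors `v`
orthogonal to the all-ones vector (the minimum is attained, so it equals the inf). -/
noncomputable def lambda2 {n : Type*} [Fintype n] (M : Matrix n n ℝ) : ℝ :=
  sInf {x : ℝ | ∃ v : n → ℝ, v ⬝ᵥ v = 1 ∧ v ⬝ᵥ (fun _ => 1) = 0 ∧ x = v ⬝ᵥ M *ᵥ v}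

lemma lambda2_mul_le {n : Type*} [Fintype n] (M : Matrix n n ℝ)
    (hM : ∀ v : n → ℝ, 0 ≤ v ⬝ᵥ M *ᵥ v) (v : n → ℝ) (hv : v ⬝ᵥ (fun _ => 1) = 0) :
    lambda2 M * (v ⬝ᵥ v) ≤ v ⬝ᵥ M *ᵥ v := by
  have h0 : 0 ≤ v ⬝ᵥ v := by
    simp only [dotProduct]; exact Finset.sum_nonneg fun i _ => mul_self_nonneg _
  rcases h0.eq_or_lt with h | h
  · rw [← h, mul_zero]; exact hM v
  · set s := v ⬝ᵥ v with hs
    have hsq : (√s)⁻¹ * (√s)⁻¹ = s⁻¹ := by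
      rw [← mul_inv, Real.mul_self_sqrt h0]
    have key : lambda2 M ≤ s⁻¹ * (v ⬝ᵥ M *ᵥ v) := by
      apply csInf_le
      · refine ⟨0, ?_⟩
        rintro x ⟨u, _, _, rfl⟩
        exact hM u
      · refine ⟨(√s)⁻¹ • v, ?_, ?_, ?_⟩
        · rw [smul_dotProduct, dotProduct_smul, smul_smul, hsq, ← hs, smul_eq_mul,
            inv_mul_cancel₀ h.ne']
        · rw [smul_dotProduct, hv, smul_zero]
        · rw [mulVec_smul, smul_dotProduct, dotProduct_smul, smul_smul, hsq, smul_eq_mul]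
    calc lambda2 M * s ≤ (s⁻¹ * (v ⬝ᵥ M *ᵥ v)) * s := by gcongr
      _ = v ⬝ᵥ M *ᵥ v := by field_simp

lemma le_lambda2 {n : Type*} [Fintype n] (M : Matrix n n ℝ) (m : ℝ) (v : n → ℝ)
    (h : 0 < v ⬝ᵥ v) (hv : v ⬝ᵥ (fun _ => 1) = 0)
    (hm : ∀ u : n → ℝ, u ⬝ᵥ u = 1 → u ⬝ᵥ (fun _ => 1) = 0 → m ≤ u ⬝ᵥ M *ᵥ u) :
    m ≤ lambda2 M := by
  apply le_csInf
  · refine ⟨_, (√(v ⬝ᵥ v))⁻¹ • v, ?_, ?_, rfl⟩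
    · rw [smul_dotProduct, dotProduct_smul, smul_smul, ← mul_inv, Real.mul_self_sqrt h.le,
        smul_eq_mul, inv_mul_cancel₀ h.ne']
    · rw [smul_dotProduct, hv, smul_zero]
  · rintro x ⟨u, h1, h2, rfl⟩
    exact hm u h1 h2

lemma supra_quad {N : ℕ} (L : Matrix (Fin N) (Fin N) ℝ) (d : ℝ) (x y : Fin N → ℝ) :
    Sum.elim x y ⬝ᵥ supraLaplacian L L (fun _ => d) *ᵥ Sum.elim x y
      = x ⬝ᵥ L *ᵥ x + y ⬝ᵥ L *ᵥ y + d * ((x - y) ⬝ᵥ (x - y)) := by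
  have hd : (Matrix.diagonal (fun _ : Fin N => d)) = d • (1 : Matrix (Fin N) (Fin N) ℝ) := by
    rw [smul_one_eq_diagonal]
  rw [supraLaplacian, fromBlocks_mulVec, hd]
  simp only [Sum.elim_comp_inl, Sum.elim_comp_inr, sumElim_dotProduct_sumElim, add_mulVec,
    neg_mulVec, smul_mulVec, one_mulVec, dotProduct_add, dotProduct_neg, dotProduct_smul,
    smul_eq_mul, dotProduct_sub, sub_dotProduct]
  ring

theorem stmt11 {N : ℕ} (hN : 2 ≤ N)
    (L₀ : Matrix (Fin N) (Fin N) ℝ)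
    (hL₀ : L₀.PosSemidef) (hL₀1 : L₀ *ᵥ (fun _ => 1) = 0)
    (c : ℝ) (hc : 0 ≤ c) :
    lambda2 (supraLaplacian L₀ L₀ (fun _ => c / N)) = min (2 * c / N) (lambda2 L₀) := by
  have hNpos : (0 : ℝ) < N := by exact_mod_cast (by omega : 0 < N)
  have hq : ∀ v : Fin N → ℝ, 0 ≤ v ⬝ᵥ L₀ *ᵥ v := fun v => by
    simpa using hL₀.dotProduct_mulVec_nonneg v
  have hn : ∀ v : Fin N → ℝ, 0 ≤ v ⬝ᵥ v := fun v => by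
    simp only [dotProduct]; exact Finset.sum_nonneg fun i _ => mul_self_nonneg _
  have hd : 0 ≤ c / N := by positivity
  have h2c : 2 * c / N = 2 * (c / N) := by ring
  rw [h2c]
  set d := c / N with hdd
  have hsplit : ∀ u : Fin N ⊕ Fin N → ℝ, ∃ x y, u = Sum.elim x y := fun u =>
    ⟨u ∘ Sum.inl, u ∘ Sum.inr, (Sum.elim_comp_inl_inr u).symm⟩
  have hone : (fun _ : Fin N ⊕ Fin N => (1 : ℝ)) = Sum.elim (fun _ => 1) (fun _ => 1) := by
    ext i; cases i <;> rfl
  have hS : ∀ u, 0 ≤ u ⬝ᵥ supraLaplacian L₀ L₀ (fun _ => d) *ᵥ u := by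
    intro u
    obtain ⟨x, y, rfl⟩ := hsplit u
    rw [supra_quad]
    have := hq x; have := hq y; have := mul_nonneg hd (hn (x - y))
    linarith
  set e : Fin N → ℝ := fun _ => 1 with he
  have hee : e ⬝ᵥ e = N := by simp [he, dotProduct]
  have hEperp : Sum.elim e (-e) ⬝ᵥ (fun _ => (1 : ℝ)) = 0 := by
    rw [hone, sumElim_dotProduct_sumElim, neg_dotProduct]; ring
  have hEnorm : Sum.elim e (-e) ⬝ᵥ Sum.elim e (-e) = 2 * N := by
    rw [sumElim_dotProduct_sumElim, neg_dotProduct, dotProduct_neg, hee]; ring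
  apply le_antisymm
  · apply le_min
    · have h := lambda2_mul_le _ hS (Sum.elim e (-e)) hEperp
      rw [hEnorm, supra_quad, mulVec_neg, hL₀1] at h
      simp only [sub_neg_eq_add, dotProduct_add, add_dotProduct, hee, neg_zero,
        dotProduct_zero] at h
      have : lambda2 (supraLaplacian L₀ L₀ fun _ => d) * (2 * N) ≤ (2 * d) * (2 * N) := by
        linarith
      exact le_of_mul_le_mul_right this (by positivity)
    · let i0 : Fin N := ⟨0, by omega⟩
      let i1 : Fin N := ⟨1, by omega⟩
      have h01 : i0 ≠ i1 := by simp [i0, i1]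
      refine le_lambda2 _ _ (Pi.single i0 1 - Pi.single i1 1) ?_ ?_ ?_
      · simp [dotProduct_sub, h01, h01.symm]
      · simp [sub_dotProduct]
      · intro u hu1 hu
        have h := lambda2_mul_le _ hS (Sum.elim u u) (by
          rw [hone, sumElim_dotProduct_sumElim, hu]; ring)
        rw [supra_quad, sumElim_dotProduct_sumElim, hu1, sub_self, dotProduct_zero] at h
        linarith
  · refine le_lambda2 _ _ (Sum.elim e (-e)) (by rw [hEnorm]; positivity) hEperp ?_
    intro u hu1 hu
    obtain ⟨x, y, rfl⟩ := hsplit u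
    rw [sumElim_dotProduct_sumElim] at hu1
    rw [hone, sumElim_dotProduct_sumElim, ← add_dotProduct] at hu
    rw [supra_quad]
    have h1 := lambda2_mul_le L₀ hq (x + y) hu
    have h2 := hq (x - y)
    have h3 := hn (x + y)
    have h4 := hn (x - y)
    have hA := mul_le_mul_of_nonneg_right (min_le_right (2 * d) (lambda2 L₀)) h3
    have hB := mul_le_mul_of_nonneg_right (min_le_left (2 * d) (lambda2 L₀)) h4
    have hpar : (x + y) ⬝ᵥ (x + y) + (x - y) ⬝ᵥ (x - y) = 2 := by
      simp only [dotProduct_add, add_dotProduct, dotProduct_sub, sub_dotProduct]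
      linarith
    have hparq : (x + y) ⬝ᵥ L₀ *ᵥ (x + y) + (x - y) ⬝ᵥ L₀ *ᵥ (x - y)
        = 2 * (x ⬝ᵥ L₀ *ᵥ x) + 2 * (y ⬝ᵥ L₀ *ᵥ y) := by
      simp only [mulVec_add, mulVec_sub, dotProduct_add, add_dotProduct, dotProduct_sub,
        sub_dotProduct]
      ring
    have hC : min (2 * d) (lambda2 L₀) * 2
        = min (2 * d) (lambda2 L₀) * ((x + y) ⬝ᵥ (x + y))
          + min (2 * d) (lambda2 L₀) * ((x - y) ⬝ᵥ (x - y)) := by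
      rw [← mul_add, hpar]
    linarith
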